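/- Let p : (0,∞) → ℝ be C² with p′ < 0 and p″ > 0, let 0 < v₊ < v₋, let a = −(v₊ − v₋)/(p(v₊) − p(v₋)), assume 1 + a p′(v₋) > 0, and set d_* = 1/(4 v₋²(1 + a p′(v₋))). If 0 ≤ d ≤ d_*, then every shock profile v̂ (C² solution of v̂ − v₋ + a(p(v̂) − p(v₋)) = v̂′/v̂ − d v̂″ with v̂(−∞) = v₋, v̂(+∞) = v₊, v̂′(±∞) = 0) is monotone, i.e. v̂′(x) < 0 for all x ∈ ℝ. -/

import Mathlib

open Filter Topology Set

/-!
Write the profile equation as `f(v) = v' / v - d v''`. The nonlinearity `f` is convex and vanishes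
at `vp` and `vm`, so `(v - vp) f(v) ≤ 0` for `v ≤ vm`. At `(vm, 0)` the linearised system has the
characteristic equation `d λ² - λ / vm + f'(vm) = 0`, whose roots are real exactly when `d ≤ d_*`;
an orbit that has just crossed `v = vm` downwards is then trapped in `w ≤ k (v - vm)`, where
`w = v'` and `k = 1 / (2 d vm)` is the mean of the two roots, and cannot come to rest at `vp`.
Hence `v < vm` throughout. It follows that `φ = (v - vp) w` satisfies `φ' ≥ φ / (d v)`: if `φ` were
nonnegative somewhere it would remain so, `(v - vp)²` would increase to its limit `0`, and the
orbit would be at rest, which uniqueness excludes. So `φ < 0`, and `v > vp` gives `w < 0`.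
For `d = 0` the orbit of `v' = v f(v)` stays between its two rest points.
-/

section Calculus

lemma lt_of_forall_ne_of_lt {X : Type*} [TopologicalSpace X] [PreconnectedSpace X] {f g : X → ℝ}
    (hf : Continuous f) (hg : Continuous g) (hne : ∀ x, f x ≠ g x) {x₀ : X} (h : f x₀ < g x₀)
    (x : X) : f x < g x := by
  by_contra! hx
  obtain ⟨z, hz⟩ := intermediate_value_univ₂ hf hg h.le hx
  exact hne z hz

lemma exists_last_eq {f : ℝ → ℝ} {m x : ℝ} (hf : Continuous f) (hx : m ≤ f x)
    (hlt : ∀ᶠ t in atTop, f t < m) : ∃ y, f y = m ∧ ∀ t > y, f t < m := by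
  obtain ⟨M, hM⟩ := eventually_atTop.1 hlt
  have hbdd : BddAbove {t | m ≤ f t} := ⟨M, fun t ht => le_of_not_ge fun h => (hM t h).not_ge ht⟩
  have hgreatest := (isClosed_le continuous_const hf).isGreatest_csSup ⟨x, hx⟩ hbdd
  set y := sSup {t | m ≤ f t}
  have hright : ∀ t > y, f t < m := fun t ht => by
    by_contra! h
    exact (hgreatest.2 h).not_gt ht
  refine ⟨y, le_antisymm ?_ hgreatest.1, hright⟩
  exact le_of_tendsto (hf.continuousWithinAt (s := Ioi y))
    (eventually_mem_nhdsWithin.mono fun t ht => (hright t ht).le)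

lemma nonpos_of_hasDerivAt_of_forall_gt_le {f : ℝ → ℝ} {f' x : ℝ} (hf : HasDerivAt f f' x)
    (hle : ∀ y > x, f y ≤ f x) : f' ≤ 0 := by
  refine le_of_tendsto ((hasDerivWithinAt_iff_tendsto_slope' self_notMem_Ioi).1
    hf.hasDerivWithinAt) (eventually_mem_nhdsWithin.mono fun y (hy : x < y) => ?_)
  rw [slope_def_field]
  exact div_nonpos_of_nonpos_of_nonneg (sub_nonpos.2 (hle y hy)) (sub_pos.2 hy).le

lemma frequently_lt_deriv_of_tendsto {f f' : ℝ → ℝ} {L c : ℝ} (hf : ∀ x, HasDerivAt f (f' x) x)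
    (hlim : Tendsto f atTop (𝓝 L)) (hc : c < 0) : ∃ᶠ x in atTop, c < f' x := by
  have hincr : Tendsto (fun x => f (x + 1) - f x) atTop (𝓝 0) := by
    simpa using (hlim.comp (tendsto_atTop_add_const_right _ 1 tendsto_id)).sub hlim
  refine frequently_atTop.2 fun y => ?_
  obtain ⟨x, hx, hyx⟩ := ((hincr.eventually_const_lt hc).and (eventually_ge_atTop y)).exists
  obtain ⟨ξ, hξ, hslope⟩ := exists_hasDerivAt_eq_slope f f' (lt_add_one x)
    (fun t _ => (hf t).continuousAt.continuousWithinAt) fun t _ => hf t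
  refine ⟨ξ, hyx.trans hξ.1.le, ?_⟩
  rwa [hslope, add_sub_cancel_left, div_one]

lemma eq_and_deriv_eq_zero_of_tendsto_of_sub_mul_deriv_nonneg {f f' : ℝ → ℝ} {L x : ℝ}
    (hf : ∀ y, HasDerivAt f (f' y) y) (hlim : Tendsto f atTop (𝓝 L))
    (hnonneg : ∀ y ≥ x, 0 ≤ (f y - L) * f' y) : f x = L ∧ f' x = 0 := by
  have hder : ∀ y, HasDerivAt (fun t => (f t - L) ^ 2) (2 * (f y - L) * f' y) y := fun y => by
    simpa using ((hf y).sub_const L).fun_pow 2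
  have hmono : MonotoneOn (fun t => (f t - L) ^ 2) (Ici x) := by
    refine monotoneOn_of_hasDerivWithinAt_nonneg (convex_Ici x)
      (fun y _ => (hder y).continuousAt.continuousWithinAt)
      (fun y _ => (hder y).hasDerivWithinAt) (fun y hy => ?_)
    linarith [hnonneg y (interior_subset hy)]
  have hsq : Tendsto (fun t => (f t - L) ^ 2) atTop (𝓝 0) := by
    simpa using (hlim.sub_const L).pow 2
  have heq : ∀ y ∈ Ici x, f y = L := fun y hy => by
    have hle : (f y - L) ^ 2 ≤ 0 := ge_of_tendsto hsq <| (eventually_ge_atTop y).mono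
      fun t ht => hmono hy (le_trans hy ht : x ≤ t) ht
    exact sub_eq_zero.1 (pow_eq_zero_iff two_ne_zero |>.1 (hle.antisymm (sq_nonneg _)))
  have hconst : HasDerivWithinAt f 0 (Ici x) x :=
    (hasDerivWithinAt_const x _ L).congr heq (heq x self_mem_Ici)
  exact ⟨heq x self_mem_Ici, (uniqueDiffWithinAt_Ici x).eq_deriv _ (hf x).hasDerivWithinAt hconst⟩

end Calculus

section Gronwall

lemma nonneg_of_mul_le_deriv {φ φ' B : ℝ → ℝ} {a b : ℝ} (hab : a ≤ b) (hB : Continuous B)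
    (hφ : ∀ x ∈ Icc a b, HasDerivAt φ (φ' x) x) (h : ∀ x ∈ Icc a b, B x * φ x ≤ φ' x)
    (ha : 0 ≤ φ a) : 0 ≤ φ b := by
  set ψ : ℝ → ℝ := fun x => Real.exp (-∫ s in a..x, B s)
  have hψ : ∀ x, HasDerivAt ψ (ψ x * -B x) x := fun x =>
    (hB.integral_hasStrictDerivAt a x).hasDerivAt.neg.exp
  have hder : ∀ x ∈ Icc a b, HasDerivAt (fun t => φ t * ψ t) (φ' x * ψ x + φ x * (ψ x * -B x)) x :=
    fun x hx => (hφ x hx).mul (hψ x)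
  have hmono : MonotoneOn (fun t => φ t * ψ t) (Icc a b) := by
    refine monotoneOn_of_hasDerivWithinAt_nonneg (convex_Icc a b)
      (fun x hx => (hder x hx).continuousAt.continuousWithinAt)
      (fun x hx => (hder x (interior_subset hx)).hasDerivWithinAt) (fun x hx => ?_)
    have := mul_nonneg (sub_nonneg.2 (h x (interior_subset hx))) (Real.exp_pos _ : 0 < ψ x).le
    linarith
  have hend : 0 ≤ φ b * ψ b := (mul_nonneg ha (Real.exp_pos _).le).trans
    (hmono (left_mem_Icc.2 hab) (right_mem_Icc.2 hab) hab)
  exact nonneg_of_mul_nonneg_left hend (Real.exp_pos _)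

variable {E : Type*} [NormedAddCommGroup E] [NormedSpace ℝ E]

lemma eq_zero_of_norm_deriv_le_mul_norm_of_le {y y' : ℝ → E} {K : ℝ → ℝ} (hK : Continuous K)
    (hy : ∀ x, HasDerivAt y (y' x) x) (hle : ∀ x, ‖y' x‖ ≤ K x * ‖y x‖) {x₀ x : ℝ}
    (h₀ : y x₀ = 0) (hx : x₀ ≤ x) : y x = 0 := by
  obtain ⟨M, hM⟩ := (isCompact_Icc (a := x₀) (b := x)).bddAbove_image hK.continuousOn
  refine eq_zero_of_abs_deriv_le_mul_abs_self_of_eq_zero_right (K := M)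
    (fun t _ => (hy t).continuousAt.continuousWithinAt) (fun t _ => (hy t).hasDerivWithinAt) h₀
    (fun t ht => (hle t).trans ?_) x (right_mem_Icc.2 hx)
  gcongr
  exact hM (mem_image_of_mem K (Ico_subset_Icc_self ht))

lemma eq_zero_of_norm_deriv_le_mul_norm {y y' : ℝ → E} {K : ℝ → ℝ} (hK : Continuous K)
    (hy : ∀ x, HasDerivAt y (y' x) x) (hle : ∀ x, ‖y' x‖ ≤ K x * ‖y x‖) {x₀ : ℝ}
    (h₀ : y x₀ = 0) (x : ℝ) : y x = 0 := by
  rcases le_total x₀ x with hx | hx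
  · exact eq_zero_of_norm_deriv_le_mul_norm_of_le hK hy hle h₀ hx
  · have hrefl : ∀ t, HasDerivAt (fun t => y (-t)) (-y' (-t)) t := fun t => by
      simpa [Function.comp_def] using (hy (-t)).scomp t (hasDerivAt_neg t)
    have := eq_zero_of_norm_deriv_le_mul_norm_of_le (hK.comp continuous_neg) hrefl
      (fun t => by simpa using hle (-t)) (x₀ := -x₀) (by simpa using h₀) (neg_le_neg hx)
    simpa using this

end Gronwall

section Convexity

variable {s : Set ℝ} {f : ℝ → ℝ} {a b x : ℝ}

lemma strictAntiOn_of_hasDerivAt_neg {f' : ℝ → ℝ} (hs : Convex ℝ s)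
    (hf : ∀ x ∈ s, HasDerivAt f (f' x) x) (hneg : ∀ x ∈ s, f' x < 0) : StrictAntiOn f s :=
  strictAntiOn_of_hasDerivWithinAt_neg hs (fun x hx => (hf x hx).continuousAt.continuousWithinAt)
    (fun x hx => (hf x (interior_subset hx)).hasDerivWithinAt)
    (fun x hx => hneg x (interior_subset hx))

lemma convexOn_of_hasDerivAt2_nonneg {f' f'' : ℝ → ℝ} (hs : Convex ℝ s)
    (hf : ∀ x ∈ s, HasDerivAt f (f' x) x) (hf' : ∀ x ∈ s, HasDerivAt f' (f'' x) x)
    (hnonneg : ∀ x ∈ s, 0 ≤ f'' x) : ConvexOn ℝ s f :=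
  convexOn_of_hasDerivWithinAt2_nonneg hs (fun x hx => (hf x hx).continuousAt.continuousWithinAt)
    (fun x hx => (hf x (interior_subset hx)).hasDerivWithinAt)
    (fun x hx => (hf' x (interior_subset hx)).hasDerivWithinAt)
    (fun x hx => hnonneg x (interior_subset hx))

lemma sub_mul_sub_nonpos_of_convexOn (hf : ConvexOn ℝ s f) (ha : a ∈ s) (hb : b ∈ s)
    (hab : a < b) (heq : f a = f b) (hx : x ∈ s) (hxb : x ≤ b) : (x - a) * (f x - f a) ≤ 0 := by
  rcases le_total x a with hxa | hax
  · exact mul_nonpos_of_nonpos_of_nonneg (sub_nonpos.2 hxa)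
      (sub_nonneg.2 (hf.le_left_of_right_le'' hx hb hxa hab heq.ge))
  · refine mul_nonpos_of_nonneg_of_nonpos (sub_nonneg.2 hax) (sub_nonpos.2 ?_)
    simpa [← heq] using hf.le_max_of_mem_Icc ha hb ⟨hax, hxb⟩

lemma deriv_mul_sub_le_sub_of_convexOn {c : ℝ} (hf : ConvexOn ℝ s f) (ha : a ∈ s) (hx : x ∈ s)
    (hc : HasDerivAt f c a) : c * (x - a) ≤ f x - f a := by
  rcases lt_trichotomy x a with hxa | rfl | hax
  · have := hf.slope_le_of_hasDerivAt hx ha hxa hc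
    rw [slope_def_field, div_le_iff₀ (sub_pos.2 hxa)] at this
    linarith
  · simp
  · have := hf.le_slope_of_hasDerivAt ha hx hax hc
    rwa [slope_def_field, le_div_iff₀ (sub_pos.2 hax)] at this

end Convexity

/-- `v` is a positive solution of the profile equation `f(v) = v' / v - d v''` on the whole line,
with derivative `w` and second derivative `w'`. Carrying `w` and `w'` as data lets a solution be
read as an orbit of the planar system in `(v, w)`. -/
structure IsProfileSolution (f : ℝ → ℝ) (d : ℝ) (v w w' : ℝ → ℝ) : Prop where
  pos : ∀ x, 0 < v x
  hasDerivAt : ∀ x, HasDerivAt v (w x) x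
  hasDerivAt_deriv : ∀ x, HasDerivAt w (w' x) x
  equation : ∀ x, f (v x) = w x / v x - d * w' x

namespace IsProfileSolution

variable {f v w w' : ℝ → ℝ} {d vp vm c x : ℝ}

lemma continuous (h : IsProfileSolution f d v w w') : Continuous v :=
  continuous_iff_continuousAt.2 fun x => (h.hasDerivAt x).continuousAt

lemma deriv_eq_mul (h : IsProfileSolution f 0 v w w') (x : ℝ) : w x = v x * f (v x) := by
  have := (h.pos x).ne'
  rw [h.equation]
  field_simp
  ring

lemma deriv2_eq (h : IsProfileSolution f d v w w') (hd : d ≠ 0) (x : ℝ) :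
    w' x = (w x / v x - f (v x)) / d := by
  rw [h.equation]
  field_simp
  ring

lemma exists_continuous_mul_sub (h : IsProfileSolution f d v w w')
    (hf : DifferentiableOn ℝ f (Ioi 0)) (hc : 0 < c) (hfc : f c = 0) :
    ∃ G : ℝ → ℝ, Continuous G ∧ ∀ x, f (v x) = G x * (v x - c) := by
  have hslope : ContinuousOn (dslope f c) (Ioi 0) := (continuousOn_dslope (Ioi_mem_nhds hc)).2
    ⟨hf.continuousOn, hf.differentiableAt (Ioi_mem_nhds hc)⟩
  refine ⟨fun x => dslope f c (v x), hslope.comp_continuous h.continuous h.pos, fun x => ?_⟩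
  rw [← sub_smul_dslope_of_zero hfc, smul_eq_mul, mul_comm]

lemma abs_deriv2_le (h : IsProfileSolution f d v w w') (hd : d ≠ 0) {g : ℝ}
    (hg : f (v x) = g * (v x - c)) :
    |w' x| ≤ ((v x)⁻¹ + |g|) / |d| * ‖(v x - c, w x)‖ := by
  have hv := h.pos x
  rw [h.deriv2_eq hd, hg, abs_div, div_mul_eq_mul_div]
  gcongr
  calc |w x / v x - g * (v x - c)|
      ≤ |w x / v x| + |g * (v x - c)| := abs_sub _ _
    _ = (v x)⁻¹ * |w x| + |g| * |v x - c| := by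
      rw [abs_div, abs_mul, abs_of_pos hv, div_eq_inv_mul]
    _ ≤ (v x)⁻¹ * ‖(v x - c, w x)‖ + |g| * ‖(v x - c, w x)‖ := by
      gcongr
      exacts [norm_snd_le (v x - c, w x), norm_fst_le (v x - c, w x)]
    _ = ((v x)⁻¹ + |g|) * ‖(v x - c, w x)‖ := by ring

lemma eq_of_rest (h : IsProfileSolution f d v w w') (hf : DifferentiableOn ℝ f (Ioi 0))
    {x₀ : ℝ} (hfx₀ : f (v x₀) = 0) (hwx₀ : w x₀ = 0) (x : ℝ) : v x = v x₀ := by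
  obtain ⟨G, hG, hfG⟩ := h.exists_continuous_mul_sub hf (h.pos x₀) hfx₀
  have hsub : ∀ t, HasDerivAt (fun s => v s - v x₀) (w t) t := fun t =>
    (h.hasDerivAt t).sub_const _
  rw [← sub_eq_zero]
  rcases eq_or_ne d 0 with rfl | hd
  · refine eq_zero_of_norm_deriv_le_mul_norm (h.continuous.mul hG).norm hsub
      (fun t => ?_) (sub_self (v x₀)) x
    rw [h.deriv_eq_mul, hfG, ← mul_assoc, norm_mul, Pi.mul_apply]
  · have hK : Continuous fun t => 1 + ((v t)⁻¹ + |G t|) / |d| :=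
      continuous_const.add
        (((h.continuous.inv₀ fun t => (h.pos t).ne').add hG.abs).div_const _)
    refine congrArg Prod.fst (eq_zero_of_norm_deriv_le_mul_norm (x₀ := x₀) hK
      (fun t => (hsub t).prodMk (h.hasDerivAt_deriv t)) (fun t => ?_) (by simp [hwx₀]) x)
    rw [add_mul, one_mul]
    exact norm_prod_le_iff.2
      ⟨le_add_of_le_of_nonneg
        (norm_snd_le (v t - v x₀, w t)) ((abs_nonneg _).trans (h.abs_deriv2_le hd (hfG t))),
      le_add_of_nonneg_of_le (norm_nonneg _) (h.abs_deriv2_le hd (hfG t))⟩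

lemma deriv_ne_zero_of_eq_zero (h : IsProfileSolution f d v w w')
    (hf : DifferentiableOn ℝ f (Ioi 0)) (hne : vp ≠ vm) (hlim_m : Tendsto v atBot (𝓝 vm))
    (hlim_p : Tendsto v atTop (𝓝 vp)) (hfx : f (v x) = 0) : w x ≠ 0 := fun hwx => by
  have hconst : v = fun _ => v x := funext (h.eq_of_rest hf hfx hwx)
  rw [hconst, tendsto_const_nhds_iff] at hlim_m hlim_p
  exact hne (hlim_p.symm.trans hlim_m)

lemma lt_left_state_of_capillarity_eq_zero (h : IsProfileSolution f 0 v w w')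
    (hf : DifferentiableOn ℝ f (Ioi 0)) (hlt : vp < vm) (hfm : f vm = 0)
    (hlim_m : Tendsto v atBot (𝓝 vm)) (hlim_p : Tendsto v atTop (𝓝 vp)) (x : ℝ) : v x < vm := by
  obtain ⟨y, hy⟩ := (hlim_p.eventually_lt_const hlt).exists
  refine lt_of_forall_ne_of_lt h.continuous continuous_const (fun t ht => ?_) hy x
  have hft : f (v t) = 0 := by rw [ht, hfm]
  exact h.deriv_ne_zero_of_eq_zero hf hlt.ne hlim_m hlim_p hft
    (by rw [h.deriv_eq_mul, hft, mul_zero])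

lemma sub_mul_deriv_neg_of_capillarity_eq_zero (h : IsProfileSolution f 0 v w w')
    (hf : DifferentiableOn ℝ f (Ioi 0)) (hne : vp ≠ vm) (hfp : f vp = 0)
    (hlim_m : Tendsto v atBot (𝓝 vm)) (hlim_p : Tendsto v atTop (𝓝 vp))
    (hsign : (v x - vp) * f (v x) ≤ 0) : (v x - vp) * w x < 0 := by
  have hfx : f (v x) ≠ 0 := fun hfx =>
    h.deriv_ne_zero_of_eq_zero hf hne hlim_m hlim_p hfx (by rw [h.deriv_eq_mul, hfx, mul_zero])
  have hvx : v x - vp ≠ 0 := fun hvx => hfx (by rw [sub_eq_zero.1 hvx, hfp])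
  rw [h.deriv_eq_mul, mul_left_comm]
  exact mul_neg_of_pos_of_neg (h.pos x) (hsign.lt_of_ne (mul_ne_zero hvx hfx))

lemma sub_mul_deriv_neg_of_capillarity_pos (h : IsProfileSolution f d v w w') (hd : 0 < d)
    (hf : DifferentiableOn ℝ f (Ioi 0)) (hne : vp ≠ vm) (hfp : f vp = 0)
    (hlim_m : Tendsto v atBot (𝓝 vm)) (hlim_p : Tendsto v atTop (𝓝 vp))
    (hsign : ∀ y ≥ x, (v y - vp) * f (v y) ≤ 0) : (v x - vp) * w x < 0 := by
  by_contra! hx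
  have hnonneg : ∀ y ≥ x, 0 ≤ (v y - vp) * w y := fun y hy => by
    refine nonneg_of_mul_le_deriv (φ := fun t => (v t - vp) * w t)
      (B := fun t => 1 / (d * v t)) hy
      (continuous_const.div (continuous_const.mul h.continuous)
        fun t => (mul_pos hd (h.pos t)).ne')
      (fun t _ => ((h.hasDerivAt t).sub_const vp).mul (h.hasDerivAt_deriv t)) (fun t ht => ?_) hx
    have hv := (h.pos t).ne'
    calc 1 / (d * v t) * ((v t - vp) * w t)
        = (v t - vp) * w' t + (v t - vp) * f (v t) / d := by
          rw [h.deriv2_eq hd.ne']; field_simp; ring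
      _ ≤ (v t - vp) * w' t + 0 := by
          gcongr; exact div_nonpos_of_nonpos_of_nonneg (hsign t ht.1) hd.le
      _ ≤ w t * w t + (v t - vp) * w' t := by linarith [mul_self_nonneg (w t)]
  obtain ⟨hvx, hwx⟩ :=
    eq_and_deriv_eq_zero_of_tendsto_of_sub_mul_deriv_nonneg h.hasDerivAt hlim_p hnonneg
  exact h.deriv_ne_zero_of_eq_zero hf hne hlim_m hlim_p (by rw [hvx, hfp]) hwx

lemma mul_le_deriv_of_le_left_state (h : IsProfileSolution f d v w w') (hd : 0 < d)
    (hdc : 4 * d * vm ^ 2 * c ≤ 1) (hvm : v x ≤ vm) (htan : c * (v x - vm) ≤ f (v x)) :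
    (1 / (d * v x) - 1 / (2 * d * vm)) * (1 / (2 * d * vm) * (v x - vm) - w x)
      ≤ 1 / (2 * d * vm) * w x - w' x := by
  have hv := h.pos x
  have hvm₀ : 0 < vm := hv.trans_le hvm
  set k := 1 / (2 * d * vm) with hk
  -- Up to the factor `4 d²`, this is the discriminant of `d λ² - λ / vm + c`.
  have hdisc : k / (d * vm) - k ^ 2 - c / d = (1 - 4 * d * vm ^ 2 * c) / (4 * d ^ 2 * vm ^ 2) := by
    rw [hk]; field_simp; ring
  have hdisc₀ : 0 ≤ k / (d * v x) - k ^ 2 - c / d :=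
    calc 0 ≤ k / (d * vm) - k ^ 2 - c / d := by
          rw [hdisc]; exact div_nonneg (sub_nonneg.2 hdc) (by positivity)
      _ ≤ k / (d * v x) - k ^ 2 - c / d := by gcongr
  rw [← sub_nonneg]
  calc 0 ≤ (f (v x) - c * (v x - vm)) / d + (vm - v x) * (k / (d * v x) - k ^ 2 - c / d) :=
        add_nonneg (div_nonneg (sub_nonneg.2 htan) hd.le) (mul_nonneg (sub_nonneg.2 hvm) hdisc₀)
    _ = k * w x - w' x - (1 / (d * v x) - k) * (k * (v x - vm) - w x) := by
        rw [h.deriv2_eq hd.ne']; field_simp; ring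

lemma deriv_le_of_le_left_state (h : IsProfileSolution f d v w w') (hd : 0 < d)
    (hdc : 4 * d * vm ^ 2 * c ≤ 1) (htan : ∀ u ∈ Ioi 0, c * (u - vm) ≤ f u) {y : ℝ}
    (hvy : v y = vm) (hwy : w y ≤ 0) (hle : ∀ t ≥ y, v t ≤ vm) (hyx : y ≤ x) :
    w x ≤ 1 / (2 * d * vm) * (v x - vm) := by
  rw [← sub_nonneg]
  refine nonneg_of_mul_le_deriv (φ := fun t => 1 / (2 * d * vm) * (v t - vm) - w t)
    (B := fun t => 1 / (d * v t) - 1 / (2 * d * vm)) hyx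
    ((continuous_const.div (continuous_const.mul h.continuous)
      fun t => (mul_pos hd (h.pos t)).ne').sub continuous_const)
    (fun t _ => (((h.hasDerivAt t).sub_const vm).const_mul _).sub (h.hasDerivAt_deriv t))
    (fun t ht => h.mul_le_deriv_of_le_left_state hd hdc (hle t ht.1) (htan _ (h.pos t))) ?_
  simpa [hvy] using hwy

lemma lt_left_state_of_capillarity_pos (h : IsProfileSolution f d v w w') (hd : 0 < d)
    (hvp : 0 < vp) (hlt : vp < vm) (hdc : 4 * d * vm ^ 2 * c ≤ 1)
    (htan : ∀ u ∈ Ioi 0, c * (u - vm) ≤ f u) (hlim_p : Tendsto v atTop (𝓝 vp)) (x : ℝ) :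
    v x < vm := by
  by_contra! hx
  obtain ⟨y, hvy, hright⟩ := exists_last_eq h.continuous hx (hlim_p.eventually_lt_const hlt)
  have hle : ∀ t ≥ y, v t ≤ vm := fun t ht =>
    ht.eq_or_lt.elim (fun hty => hty ▸ hvy.le) fun hyt => (hright t hyt).le
  have hwy : w y ≤ 0 := nonpos_of_hasDerivAt_of_forall_gt_le (h.hasDerivAt y)
    fun t ht => (hle t ht.le).trans_eq hvy.symm
  set k := 1 / (2 * d * vm)
  have hk : 0 < k := one_div_pos.2 (mul_pos (mul_pos two_pos hd) (hvp.trans hlt))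
  obtain ⟨m, hpm, hm⟩ := exists_between hlt
  have hlow : ∃ᶠ t in atTop, k * (m - vm) < w t :=
    frequently_lt_deriv_of_tendsto h.hasDerivAt hlim_p (mul_neg_of_pos_of_neg hk (sub_neg.2 hm))
  obtain ⟨t, hwt, hvt, hyt⟩ := (hlow.and_eventually
    ((hlim_p.eventually_lt_const hpm).and (eventually_ge_atTop y))).exists
  have hupp : w t ≤ k * (v t - vm) := h.deriv_le_of_le_left_state hd hdc htan hvy hwy hle hyt
  exact (hwt.trans_le hupp).not_ge (by gcongr)

theorem deriv_neg_of_convexOn (h : IsProfileSolution f d v w w') (hd : 0 ≤ d)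
    (hf : DifferentiableOn ℝ f (Ioi 0)) (hconv : ConvexOn ℝ (Ioi 0) f)
    (hvp : 0 < vp) (hlt : vp < vm) (hfp : f vp = 0) (hfm : f vm = 0) (hc : HasDerivAt f c vm)
    (hdc : 4 * d * vm ^ 2 * c ≤ 1) (hlim_m : Tendsto v atBot (𝓝 vm))
    (hlim_p : Tendsto v atTop (𝓝 vp)) (x : ℝ) : w x < 0 := by
  have hvm : 0 < vm := hvp.trans hlt
  have hlt_vm : ∀ t, v t < vm := by
    rcases hd.eq_or_lt with rfl | hd
    · exact h.lt_left_state_of_capillarity_eq_zero hf hlt hfm hlim_m hlim_p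
    · refine h.lt_left_state_of_capillarity_pos hd hvp hlt hdc (fun u hu => ?_) hlim_p
      simpa [hfm] using deriv_mul_sub_le_sub_of_convexOn hconv hvm hu hc
  have hsign : ∀ t, (v t - vp) * f (v t) ≤ 0 := fun t => by
    simpa [hfp] using sub_mul_sub_nonpos_of_convexOn hconv hvp hvm hlt (hfp.trans hfm.symm)
      (h.pos t) (hlt_vm t).le
  have hneg : ∀ t, (v t - vp) * w t < 0 := fun t => by
    rcases hd.eq_or_lt with rfl | hd
    · exact h.sub_mul_deriv_neg_of_capillarity_eq_zero hf hlt.ne hfp hlim_m hlim_p (hsign t)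
    · exact h.sub_mul_deriv_neg_of_capillarity_pos hd hf hlt.ne hfp hlim_m hlim_p fun y _ => hsign y
  obtain ⟨y, hy⟩ := (hlim_m.eventually_const_lt hlt).exists
  have hgt_vp : vp < v x := lt_of_forall_ne_of_lt continuous_const h.continuous
    (fun t ht => (hneg t).ne (by rw [ht, sub_self, zero_mul])) hy x
  exact (pos_iff_neg_of_mul_neg (hneg x)).1 (sub_pos.2 hgt_vp)

end IsProfileSolution

/-- The nonlinearity `v - v₋ + a (p(v) - p(v₋))` of the profile equation, for the pressure `p` and
the left state `vm = v₋`. -/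
def profileForce (p : ℝ → ℝ) (a vm v : ℝ) : ℝ :=
  v - vm + a * (p v - p vm)

section ProfileForce

variable {p : ℝ → ℝ} {a vp vm : ℝ}

lemma profileForce_self : profileForce p a vm vm = 0 := by
  simp [profileForce]

lemma profileForce_eq_zero_of_rankineHugoniot (hp : p vp ≠ p vm)
    (ha : a = -(vp - vm) / (p vp - p vm)) : profileForce p a vm vp = 0 := by
  rw [profileForce, ha, div_mul_cancel₀ _ (sub_ne_zero.2 hp), add_neg_cancel]

lemma hasDerivAt_profileForce {c v : ℝ} (hp : HasDerivAt p c v) :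
    HasDerivAt (profileForce p a vm) (1 + a * c) v :=
  ((hasDerivAt_id v).sub_const vm).add ((hp.sub_const (p vm)).const_mul a)

lemma convexOn_profileForce {s : Set ℝ} (hp : ConvexOn ℝ s p) (ha : 0 ≤ a) :
    ConvexOn ℝ s (profileForce p a vm) :=
  ((convexOn_id hp.1).sub (concaveOn_const vm hp.1)).add
    ((hp.sub (concaveOn_const (p vm) hp.1)).smul ha)

end ProfileForce

theorem monotone_below_dstar_general {p p' : ℝ → ℝ} {vp vm a d dstar : ℝ} {v w w' : ℝ → ℝ}
    (hp : ∀ u ∈ Ioi (0 : ℝ), HasDerivAt p (p' u) u) (hconv : ConvexOn ℝ (Ioi 0) p)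
    (hvp : 0 < vp) (hlt : vp < vm) (hpm : p vm < p vp) (ha : a = -(vp - vm) / (p vp - p vm))
    (hb : 0 < 1 + a * p' vm) (hdstar : dstar = 1 / (4 * vm ^ 2 * (1 + a * p' vm)))
    (hd₀ : 0 ≤ d) (hd : d ≤ dstar) (h : IsProfileSolution (profileForce p a vm) d v w w')
    (hlim_m : Tendsto v atBot (𝓝 vm)) (hlim_p : Tendsto v atTop (𝓝 vp)) (x : ℝ) : w x < 0 := by
  have hvm : 0 < vm := hvp.trans hlt
  have ha₀ : 0 ≤ a := by
    rw [ha, neg_sub]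
    exact div_nonneg (sub_pos.2 hlt).le (sub_pos.2 hpm).le
  have hdc : 4 * d * vm ^ 2 * (1 + a * p' vm) ≤ 1 := by
    rw [hdstar, le_div_iff₀ (by positivity)] at hd
    linarith
  exact h.deriv_neg_of_convexOn hd₀
    (fun u hu => (hasDerivAt_profileForce (hp u hu)).differentiableAt.differentiableWithinAt)
    (convexOn_profileForce hconv ha₀) hvp hlt (profileForce_eq_zero_of_rankineHugoniot hpm.ne' ha)
    profileForce_self (hasDerivAt_profileForce (hp vm hvm)) hdc hlim_m hlim_p x

/-- If `0 ≤ d ≤ d_* = 1/(4 vm² (1 + a p'(vm)))`, then every shock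
profile of Slemrod's model is monotone: `vhat'(x) < 0` for all `x`. -/
theorem monotone_below_dstar
    (p p' p'' : ℝ → ℝ)
    (hp'd : ∀ v ∈ Ioi (0:ℝ), HasDerivAt p (p' v) v)
    (hp''d : ∀ v ∈ Ioi (0:ℝ), HasDerivAt p' (p'' v) v)
    (hp''cont : ContinuousOn p'' (Ioi 0))
    (hp'neg : ∀ v ∈ Ioi (0:ℝ), p' v < 0)
    (hp''pos : ∀ v ∈ Ioi (0:ℝ), 0 < p'' v)
    (vp vm a d : ℝ)
    (hvp : 0 < vp) (hvlt : vp < vm)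
    (ha : a = -(vp - vm) / (p vp - p vm))
    (hb : 0 < 1 + a * p' vm)
    (dstar : ℝ) (hdstar : dstar = 1 / (4 * vm ^ 2 * (1 + a * p' vm)))
    (hd0 : 0 ≤ d) (hdle : d ≤ dstar)
    (vhat vhat' vhat'' : ℝ → ℝ)
    (hpos : ∀ x, 0 < vhat x)
    (hder1 : ∀ x, HasDerivAt vhat (vhat' x) x)
    (hder2 : ∀ x, HasDerivAt vhat' (vhat'' x) x)
    (hprof : ∀ x, vhat x - vm + a * (p (vhat x) - p vm) = vhat' x / vhat x - d * vhat'' x)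
    (hlim_m : Tendsto vhat atBot (𝓝 vm))
    (hlim_p : Tendsto vhat atTop (𝓝 vp))
    (hlimd_m : Tendsto vhat' atBot (𝓝 0))
    (hlimd_p : Tendsto vhat' atTop (𝓝 0)) :
    ∀ x, vhat' x < 0 := by
  have hanti : StrictAntiOn p (Ioi 0) := strictAntiOn_of_hasDerivAt_neg (convex_Ioi 0) hp'd hp'neg
  have hconv : ConvexOn ℝ (Ioi 0) p :=
    convexOn_of_hasDerivAt2_nonneg (convex_Ioi 0) hp'd hp''d fun v hv => (hp''pos v hv).le
  exact monotone_below_dstar_general hp'd hconv hvp hvlt (hanti hvp (hvp.trans hvlt) hvlt) ha hb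
    hdstar hd0 hdle ⟨hpos, hder1, hder2, hprof⟩ hlim_m hlim_p
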